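/- Let R := ℤ[x₁, x₂, x₃, y]/I be the quotient of the polynomial ring over ℤ by the ideal I generated by x₁², x₂² − x₁x₂, x₃² − x₂x₃, and y³. Then the annihilator ideal of the residue class of x₃ + y in R equals the ideal of R generated by the residue classes of x₂y² − x₃y², x₁x₃y − x₃²y − x₁y² + x₃y², and x₃³ − x₃²y + x₃y². -/

import Mathlib

open MvPolynomial

/-!
Put `A = ℤ[x₁,x₂,x₃]/(x₁², x₂² − x₁x₂, x₃² − x₂x₃)`, so that `R = A[y]/(y³)` is free over `A` on
`1, y, y²`. If `a = a₀ + a₁y + a₂y²` is killed by `x₃ + y`, comparing coefficients gives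
`a₁ = −a₂x₃`, `a₀ = a₂x₃²` and `a₂x₃³ = 0`; that is, `a = a₂θ` with `θ = y² − x₃y + x₃²` and
`a₂x₃³ = 0`. In `A` we have `x₃³ = x₁x₂x₃`, which is killed by each `xᵢ` and is not torsion, so
`a₂x₃³ = 0` forces `a₂ ∈ (x₁,x₂,x₃)`. Hence the annihilator is `(x₁θ, x₂θ, x₃θ)`, and the three
generators of the theorem are `(x₂ − x₃)θ`, `(x₃ − x₁)θ` and `x₃θ`.

Freeness over `A` enters through the map `ℤ[x₁,x₂,x₃,y] → A[Y]`, which sends the relations of `R`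
into `(Y³)`, and non-torsion of `x₁x₂x₃` through an explicit tower of quadratic algebras.
-/

namespace BR32

/-- The ideal of relations `x₁² = 0`, `x₂² = x₁x₂`, `x₃² = x₂x₃` of `H*(BF₃)`. -/
noncomputable def relBF : Ideal (MvPolynomial (Fin 3) ℤ) :=
  Ideal.span {X 0 ^ 2, X 1 ^ 2 - X 0 * X 1, X 2 ^ 2 - X 1 * X 2}

/-- The ring `ℤ[x₁,x₂,x₃]/(x₁², x₂² − x₁x₂, x₃² − x₂x₃)`. -/
abbrev A : Type := MvPolynomial (Fin 3) ℤ ⧸ relBF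

/-- The class of `xᵢ₊₁` in `A`. -/
noncomputable def gen (i : Fin 3) : A := Ideal.Quotient.mk relBF (X i)

lemma gen_zero_sq : gen 0 ^ 2 = 0 := by
  rw [gen, ← map_pow, Ideal.Quotient.eq_zero_iff_mem]
  exact Ideal.subset_span (by simp)

lemma gen_one_sq : gen 1 ^ 2 = gen 0 * gen 1 := by
  rw [gen, gen, ← map_pow, ← map_mul, Ideal.Quotient.eq]
  exact Ideal.subset_span (by simp)

lemma gen_two_sq : gen 2 ^ 2 = gen 1 * gen 2 := by
  rw [gen, gen, ← map_pow, ← map_mul, Ideal.Quotient.eq]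
  exact Ideal.subset_span (by simp)

/-- The universal property of `A`. -/
lemma exists_lift {B : Type*} [CommRing B] (v : Fin 3 → B) (h0 : v 0 ^ 2 = 0)
    (h1 : v 1 ^ 2 = v 0 * v 1) (h2 : v 2 ^ 2 = v 1 * v 2) :
    ∃ L : A →+* B, ∀ i, L (gen i) = v i := by
  have hv : relBF ≤ RingHom.ker (eval₂Hom (Int.castRingHom B) v) := by
    rw [relBF, Ideal.span_le]
    rintro p (rfl | rfl | rfl) <;> simp [RingHom.mem_ker, h0, h1, h2]
  refine ⟨Ideal.Quotient.lift relBF (eval₂Hom (Int.castRingHom B) v) fun p hp =>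
    RingHom.mem_ker.mp (hv hp),
    fun i => ?_⟩
  rw [gen, Ideal.Quotient.lift_mk, coe_eval₂Hom, eval₂_X]

/-- The `ℤ`-algebra with basis `1, x₁`, where `x₁² = 0`. -/
abbrev T1 : Type := QuadraticAlgebra ℤ 0 0

/-- The `T1`-algebra with basis `1, x₂`, where `x₂² = x₁x₂`. -/
abbrev T2 : Type := QuadraticAlgebra T1 0 ⟨0, 1⟩

/-- The `T2`-algebra with basis `1, x₃`, where `x₃² = x₂x₃`. -/
abbrev T3 : Type := QuadraticAlgebra T2 0 ⟨0, 1⟩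

/-- The class `x₃³ = x₁x₂x₃` is not torsion in `A`. -/
lemma eq_zero_of_mul_gen_cube {n : ℤ} (h : (n : A) * gen 2 ^ 3 = 0) : n = 0 := by
  obtain ⟨L, hL⟩ := exists_lift
    (![⟨⟨⟨0, 1⟩, 0⟩, 0⟩, ⟨⟨0, 1⟩, 0⟩, ⟨0, 1⟩] : Fin 3 → T3)
    (by ext <;> simp [pow_two]) (by ext <;> simp [pow_two]) (by ext <;> simp [pow_two])
  have h' := congrArg L h
  rw [map_mul, map_pow, hL, map_intCast, map_zero] at h'
  have h3 := congrArg (fun t : T3 => t.im.im.im) h'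
  simpa [pow_succ] using h3

/-- Every element of `A` is an integer plus an element of `(x₁, x₂, x₃)`. -/
lemma exists_decomp (c : A) :
    ∃ (n : ℤ) (u v w : A), c = n + gen 0 * u + gen 1 * v + gen 2 * w := by
  obtain ⟨p, rfl⟩ := Ideal.Quotient.mk_surjective c
  induction p using MvPolynomial.induction_on with
  | C n => exact ⟨n, 0, 0, 0, by simp⟩
  | add p q hp hq =>
    obtain ⟨n, u, v, w, h⟩ := hp
    obtain ⟨n', u', v', w', h'⟩ := hq
    refine ⟨n + n', u + u', v + v', w + w', ?_⟩
    rw [map_add, h, h']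
    push_cast
    ring
  | mul_X p i hp =>
    rw [map_mul, mul_comm]
    fin_cases i
    · exact ⟨0, Ideal.Quotient.mk relBF p, 0, 0, by simp [gen]⟩
    · exact ⟨0, 0, Ideal.Quotient.mk relBF p, 0, by simp [gen]⟩
    · exact ⟨0, 0, 0, Ideal.Quotient.mk relBF p, by simp [gen]⟩

/-- The annihilator of `x₃³` in `A` lies in `(x₁, x₂, x₃)`. -/
lemma mem_of_mul_gen_cube {c : A} (h : c * gen 2 ^ 3 = 0) :
    ∃ u v w : A, c = gen 0 * u + gen 1 * v + gen 2 * w := by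
  obtain ⟨n, u, v, w, rfl⟩ := exists_decomp c
  have h0 := gen_zero_sq
  have h1 := gen_one_sq
  have h2 := gen_two_sq
  have hc : gen 2 ^ 3 = gen 0 * gen 1 * gen 2 := by
    linear_combination (gen 2 + gen 1) * h2 + gen 2 * h1
  have hn : n = 0 := eq_zero_of_mul_gen_cube <| by
    rw [hc] at h ⊢
    linear_combination h - (u + v + w) * gen 1 * gen 2 * h0
      - (v + w) * gen 0 * gen 2 * h1 - w * gen 0 * gen 1 * h2
  exact ⟨u, v, w, by simp [hn]⟩

end BR32

theorem annihilator_BR32 (I : Ideal (MvPolynomial (Fin 4) ℤ))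
    (hI : I = Ideal.span
      {(X 0 : MvPolynomial (Fin 4) ℤ) ^ 2,
       X 1 ^ 2 - X 0 * X 1,
       X 2 ^ 2 - X 1 * X 2,
       X 3 ^ 3}) :
    ∀ a : MvPolynomial (Fin 4) ℤ ⧸ I,
      a * Ideal.Quotient.mk I (X 2 + X 3) = 0 ↔
      a ∈ Ideal.span
        {Ideal.Quotient.mk I (X 1 * X 3 ^ 2 - X 2 * X 3 ^ 2),
         Ideal.Quotient.mk I
           (X 0 * X 2 * X 3 - X 2 ^ 2 * X 3 - X 0 * X 3 ^ 2 + X 2 * X 3 ^ 2),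
         Ideal.Quotient.mk I (X 2 ^ 3 - X 2 ^ 2 * X 3 + X 2 * X 3 ^ 2)} := by
  intro a
  have r0 : Ideal.Quotient.mk I (X 0) ^ 2 = 0 := by
    rw [← map_pow, Ideal.Quotient.eq_zero_iff_mem, hI]
    exact Ideal.subset_span (by simp)
  have r1 : Ideal.Quotient.mk I (X 1) ^ 2
      = Ideal.Quotient.mk I (X 0) * Ideal.Quotient.mk I (X 1) := by
    rw [← map_pow, ← map_mul, Ideal.Quotient.eq, hI]
    exact Ideal.subset_span (by simp)
  have r2 : Ideal.Quotient.mk I (X 2) ^ 2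
      = Ideal.Quotient.mk I (X 1) * Ideal.Quotient.mk I (X 2) := by
    rw [← map_pow, ← map_mul, Ideal.Quotient.eq, hI]
    exact Ideal.subset_span (by simp)
  have r3 : Ideal.Quotient.mk I (X 3) ^ 3 = 0 := by
    rw [← map_pow, Ideal.Quotient.eq_zero_iff_mem, hI]
    exact Ideal.subset_span (by simp)
  obtain ⟨p, rfl⟩ := Ideal.Quotient.mk_surjective a
  let f : MvPolynomial (Fin 4) ℤ →+* Polynomial BR32.A :=
    eval₂Hom (Int.castRingHom _) ![Polynomial.C (BR32.gen 0), Polynomial.C (BR32.gen 1),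
      Polynomial.C (BR32.gen 2), Polynomial.X]
  have f0 : f (X 0) = Polynomial.C (BR32.gen 0) := by simp [f]
  have f1 : f (X 1) = Polynomial.C (BR32.gen 1) := by simp [f]
  have f2 : f (X 2) = Polynomial.C (BR32.gen 2) := by simp [f]
  have f3 : f (X 3) = Polynomial.X := by simp [f]
  have hf : ∀ q ∈ I, (Polynomial.X : Polynomial BR32.A) ^ 3 ∣ f q := by
    have : I ≤ (Ideal.span {(Polynomial.X : Polynomial BR32.A) ^ 3}).comap f := by
      rw [hI, Ideal.span_le]
      rintro q (rfl | rfl | rfl | rfl) <;> rw [SetLike.mem_coe, Ideal.mem_comap]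
      · rw [map_pow, f0, ← Polynomial.C_pow, BR32.gen_zero_sq, Polynomial.C_0]
        exact zero_mem _
      · rw [map_sub, map_mul, map_pow, f0, f1, ← Polynomial.C_pow, ← Polynomial.C_mul,
          BR32.gen_one_sq, sub_self]
        exact zero_mem _
      · rw [map_sub, map_mul, map_pow, f1, f2, ← Polynomial.C_pow, ← Polynomial.C_mul,
          BR32.gen_two_sq, sub_self]
        exact zero_mem _
      · rw [map_pow, f3]
        exact Ideal.subset_span rfl
    intro q hq
    obtain ⟨c, hc⟩ := Ideal.mem_span_singleton'.mp (this hq)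
    exact ⟨c, by rw [← hc, Polynomial.X_pow_mul]⟩
  obtain ⟨L, hL⟩ := BR32.exists_lift
    (fun i : Fin 3 => Ideal.Quotient.mk I (X i.castSucc)) r0 r1 r2
  have L0 : L (BR32.gen 0) = Ideal.Quotient.mk I (X 0) := hL 0
  have L1 : L (BR32.gen 1) = Ideal.Quotient.mk I (X 1) := hL 1
  have L2 : L (BR32.gen 2) = Ideal.Quotient.mk I (X 2) := hL 2
  -- The quotient map factors through `f`, so a class is determined by the image of `p` in `A[Y]`.
  have hg : ∀ q, Polynomial.eval₂ L (Ideal.Quotient.mk I (X 3)) (f q)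
      = Ideal.Quotient.mk I q := by
    have : (Polynomial.eval₂RingHom L (Ideal.Quotient.mk I (X 3))).comp f
        = Ideal.Quotient.mk I := by
      apply MvPolynomial.ringHom_ext
      · intro n; simp
      · intro i
        fin_cases i
        · simp [f0, L0]
        · simp [f1, L1]
        · simp [f2, L2]
        · simp [f3]
    exact fun q => RingHom.congr_fun this q
  constructor
  · intro h
    rw [← map_mul, Ideal.Quotient.eq_zero_iff_mem] at h
    have h' := hf _ h
    rw [map_mul, map_add, f2, f3,
      Polynomial.X_pow_dvd_iff] at h'
    have e1 := h' 1 (by norm_num)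
    have e2 := h' 2 (by norm_num)
    have e0 := h' 0 (by norm_num)
    rw [mul_add, Polynomial.coeff_add, Polynomial.coeff_mul_C] at e0 e1 e2
    rw [Polynomial.coeff_mul_X_zero] at e0
    rw [Polynomial.coeff_mul_X (n := 0)] at e1
    rw [Polynomial.coeff_mul_X (n := 1)] at e2
    obtain ⟨Q, hQ⟩ : (Polynomial.X : Polynomial BR32.A) ^ 3 ∣ f p -
        (Polynomial.C ((f p).coeff 0) + Polynomial.C ((f p).coeff 1) * Polynomial.X
          + Polynomial.C ((f p).coeff 2) * Polynomial.X ^ 2) := by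
      rw [Polynomial.X_pow_dvd_iff]
      intro d hd
      interval_cases d <;> simp [Polynomial.coeff_X, Polynomial.coeff_C, Polynomial.coeff_X_pow]
    obtain ⟨u, v, w, hc⟩ := BR32.mem_of_mul_gen_cube (c := (f p).coeff 2) <| by
      linear_combination e0 - BR32.gen 2 * e1 + BR32.gen 2 ^ 2 * e2
    have e1' : (f p).coeff 1 = -((f p).coeff 2 * BR32.gen 2) := by linear_combination e2
    have e0' : (f p).coeff 0 = (f p).coeff 2 * BR32.gen 2 ^ 2 := by
      linear_combination e1 - BR32.gen 2 * e2
    have hp := hg p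
    rw [sub_eq_iff_eq_add.mp hQ, e0', e1', hc] at hp
    simp only [Polynomial.eval₂_add, Polynomial.eval₂_mul, Polynomial.eval₂_neg, Polynomial.eval₂_pow,
      Polynomial.eval₂_X, Polynomial.eval₂_C, r3, map_add, map_mul, map_neg, map_pow,
      L0, L1, L2] at hp
    rw [← hp]
    -- With `θ = y² − x₃y + x₃²` and `g₁, g₂, g₃` the generators:
    -- `x₁θ = g₃ − g₂`, `x₂θ = g₁ + g₃` and `x₃θ = g₃`.
    simp only [Ideal.mem_span_insert, Ideal.mem_span_singleton']
    refine ⟨L v, _, ⟨-L u, _, ⟨L u + L v + L w, rfl⟩, rfl⟩, ?_⟩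
    simp only [map_add, map_sub, map_mul, map_pow]
    generalize Ideal.Quotient.mk I (X 0) = x0 at *
    generalize Ideal.Quotient.mk I (X 1) = x1 at *
    generalize Ideal.Quotient.mk I (X 2) = x2 at *
    generalize Ideal.Quotient.mk I (X 3) = y at *
    linear_combination (L v * (y - x2) - L u * (x2 - x0 + x1)) * r2 - L u * x2 * r1
  · intro h
    simp only [Ideal.mem_span_insert, Ideal.mem_span_singleton'] at h
    obtain ⟨s, _, ⟨t, _, ⟨k, rfl⟩, rfl⟩, h⟩ := h
    rw [h]
    simp only [map_add, map_sub, map_mul, map_pow]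
    generalize Ideal.Quotient.mk I (X 0) = x0 at *
    generalize Ideal.Quotient.mk I (X 1) = x1 at *
    generalize Ideal.Quotient.mk I (X 2) = x2 at *
    generalize Ideal.Quotient.mk I (X 3) = y at *
    linear_combination (s * (x1 - x2) + t * (x2 - x0) + k * x2) * r3
      + (-s * y ^ 2 - t * y * (x2 - x0 + x1) + k * (x2 ^ 2 + x1 * x2 + x0 * x1)) * r2
      + (-t * y * x2 + k * (x2 ^ 2 + x0 * x2)) * r1 + k * x1 * x2 * r0
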